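/- Let n ≥ 2, k ≥ 1, and for real numbers x, y, z let R_{x,y,z} be the self-adjoint endomorphism of ⋀²ℝ^{n+k} defined on the orthonormal basis {e_i ∧ e_j} by R(e_i ∧ e_j) = x·e_i ∧ e_j if 1 ≤ i < j ≤ n, R(e_i ∧ e_j) = y·e_i ∧ e_j if i ≤ n < j, and R(e_i ∧ e_j) = z·e_i ∧ e_j if n+1 ≤ i < j. Then R_{x,y,z} ∈ S²_B(⋀²ℝ^{n+k}) and Q(R_{x,y,z}) = R_{x',y',z'} where x' = (n−1)x² + ky², y' = y(y + (n−1)x + (k−1)z), and z' = (k−1)z² + ny². In particular, the ODE dR/dt = Q(R) restricted to operators of this form is the system dx/dt = (n−1)x² + ky², dy/dt = y(y + (n−1)x + (k−1)z), dz/dt = (k−1)z² + ny². -/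

import Mathlib

open scoped BigOperators
open Matrix Filter

noncomputable section

/-- `so n`: the Lie algebra of real skew-symmetric `n × n` matrices, as a submodule of
matrices.  It is the model for `⋀²ℝⁿ` under the identification `x ∧ y ↦ x yᵀ - y xᵀ`,
i.e. `(x ∧ y)(z) = ⟨y,z⟩x - ⟨x,z⟩y`. -/
def so (n : ℕ) : Submodule ℝ (Matrix (Fin n) (Fin n) ℝ) where
  carrier := {A | Aᵀ = -A}
  add_mem' := fun {a b} ha hb => by
    simp only [Set.mem_setOf_eq] at *
    rw [Matrix.transpose_add, ha, hb, neg_add]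
  zero_mem' := by simp
  smul_mem' := fun c {a} ha => by
    simp only [Set.mem_setOf_eq] at *
    rw [Matrix.transpose_smul, ha, smul_neg]

lemma mem_so {n : ℕ} {A : Matrix (Fin n) (Fin n) ℝ} : A ∈ so n ↔ Aᵀ = -A := Iff.rfl

lemma so_skew {n : ℕ} (X : so n) : (X.1)ᵀ = -X.1 := mem_so.mp X.2

lemma so_skew' {n : ℕ} (X : so n) (i j : Fin n) : X.1 j i = -X.1 i j := by
  have h := congrFun (congrFun (so_skew X) i) j
  simpa [Matrix.transpose_apply] using h

/-- The Lie bracket (matrix commutator) on `so n`. -/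
def brkt {n : ℕ} (X Y : so n) : so n :=
  ⟨X.1 * Y.1 - Y.1 * X.1, by
    rw [mem_so, Matrix.transpose_sub, Matrix.transpose_mul, Matrix.transpose_mul,
      so_skew X, so_skew Y]
    simp [neg_sub]⟩

/-- The inner product `⟨A, B⟩ = -(1/2) tr (A B)` on `so n ≅ ⋀²ℝⁿ`, for which
`{e_i ∧ e_j : i < j}` is orthonormal. -/
def ip {n : ℕ} (X Y : so n) : ℝ := -(1 / 2) * (X.1 * Y.1).trace

/-- `ip X` as a linear functional. -/
def ipL {n : ℕ} (X : so n) : so n →ₗ[ℝ] ℝ where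
  toFun Y := ip X Y
  map_add' Y Z := by
    simp [ip, Matrix.mul_add, Matrix.trace_add]
    ring
  map_smul' c Y := by
    simp [ip, Matrix.mul_smul, Matrix.trace_smul]
    ring

/-- The wedge `x ∧ y` of two vectors, as an element of `so n`. -/
def wedgeVec {n : ℕ} (x y : Fin n → ℝ) : so n :=
  ⟨Matrix.of fun i j => x i * y j - y i * x j, by
    rw [mem_so]
    ext i j
    simp [Matrix.transpose_apply]
    ring⟩

/-- Index set for the standard orthonormal basis `{e_i ∧ e_j : i < j}` of `so n`. -/
def pairs (n : ℕ) : Finset (Fin n × Fin n) := Finset.univ.filter (fun p => p.1 < p.2)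

/-- Standard basis vector of `ℝⁿ`. -/
def stdVec {n : ℕ} (i : Fin n) : Fin n → ℝ := Pi.single i 1

/-- The standard orthonormal basis element `e_i ∧ e_j` of `so n`. -/
def omegaB {n : ℕ} (p : Fin n × Fin n) : so n := wedgeVec (stdVec p.1) (stdVec p.2)

/-- Hamilton's sharp product `A # B` of self-adjoint endomorphisms of `⋀²ℝⁿ ≅ so n`:
`⟨(A # B)(φ), ψ⟩ = (1/2) Σ_{α,β} ⟨[A ω_α, B ω_β], φ⟩ ⟨[ω_α, ω_β], ψ⟩`
over the orthonormal basis `{ω_α} = {e_i ∧ e_j : i < j}`. -/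
def sharp {n : ℕ} (A B : Module.End ℝ (so n)) : Module.End ℝ (so n) :=
  (1 / 2 : ℝ) • ∑ p ∈ pairs n, ∑ q ∈ pairs n,
    (ipL (brkt (A (omegaB p)) (B (omegaB q)))).smulRight (brkt (omegaB p) (omegaB q))

/-- The bilinear map `Q(A,B) = (1/2)(AB + BA) + A # B`. -/
def Qbil {n : ℕ} (A B : Module.End ℝ (so n)) : Module.End ℝ (so n) :=
  (1 / 2 : ℝ) • (A * B + B * A) + sharp A B

/-- `Q(R) = R² + R # R`. -/
def Qop {n : ℕ} (R : Module.End ℝ (so n)) : Module.End ℝ (so n) := R * R + sharp R R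

/-- Self-adjointness of an endomorphism of `so n ≅ ⋀²ℝⁿ`. -/
def IsSelfAdjointCO {n : ℕ} (R : Module.End ℝ (so n)) : Prop :=
  ∀ X Y : so n, ip (R X) Y = ip X (R Y)

/-- The first Bianchi identity. -/
def SatBianchi {n : ℕ} (R : Module.End ℝ (so n)) : Prop :=
  ∀ x y z w : Fin n → ℝ,
    ip (R (wedgeVec x y)) (wedgeVec z w) + ip (R (wedgeVec y z)) (wedgeVec x w)
      + ip (R (wedgeVec z x)) (wedgeVec y w) = 0

/-- Algebraic curvature operators: self-adjoint endomorphisms of `⋀²ℝⁿ` satisfying the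
first Bianchi identity.  `IsACO R` says `R ∈ S²_B(⋀²ℝⁿ)`. -/
def IsACO {n : ℕ} (R : Module.End ℝ (so n)) : Prop := IsSelfAdjointCO R ∧ SatBianchi R

/-- The Ricci tensor of `R`, `Ric(R)_{ij} = Σ_k ⟨R(e_i ∧ e_k), e_j ∧ e_k⟩`. -/
def RicM {n : ℕ} (R : Module.End ℝ (so n)) : Matrix (Fin n) (Fin n) ℝ :=
  Matrix.of fun i j => ∑ k, ip (R (wedgeVec (stdVec i) (stdVec k))) (wedgeVec (stdVec j) (stdVec k))

/-- The scalar curvature `s(R) = tr Ric(R)`. -/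
def scal {n : ℕ} (R : Module.End ℝ (so n)) : ℝ := (RicM R).trace

/-- `‖Ric(R)‖² = tr (Ric(R)²)`. -/
def ricNormSq {n : ℕ} (R : Module.End ℝ (so n)) : ℝ := (RicM R * RicM R).trace

/-- The traceless Ricci tensor `Ric₀(R)`. -/
def Ric0M {n : ℕ} (R : Module.End ℝ (so n)) : Matrix (Fin n) (Fin n) ℝ :=
  RicM R - (scal R / n) • (1 : Matrix (Fin n) (Fin n) ℝ)

/-- `R` is Einstein if `Ric(R)` is a scalar multiple of the identity of `ℝⁿ`. -/
def IsEinstein {n : ℕ} (R : Module.End ℝ (so n)) : Prop :=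
  ∃ c : ℝ, RicM R = c • (1 : Matrix (Fin n) (Fin n) ℝ)

lemma wedgeEnd_key {n : ℕ} (A B : Matrix (Fin n) (Fin n) ℝ) (M : so n) :
    (A * M.1 * Bᵀ + B * M.1 * Aᵀ)ᵀ = -(A * M.1 * Bᵀ + B * M.1 * Aᵀ) := by
  have hM := so_skew M
  rw [Matrix.transpose_add, Matrix.transpose_mul, Matrix.transpose_mul,
    Matrix.transpose_mul, Matrix.transpose_mul, Matrix.transpose_transpose,
    Matrix.transpose_transpose, hM]
  simp only [Matrix.mul_neg, Matrix.neg_mul, Matrix.mul_assoc, neg_add]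
  abel

/-- The wedge `A ∧ B` of two endomorphisms of `ℝⁿ`, as an endomorphism of `⋀²ℝⁿ ≅ so n`:
`(A ∧ B)(v ∧ w) = (1/2)(Av ∧ Bw + Bv ∧ Aw)`, i.e. `M ↦ (1/2)(A M Bᵀ + B M Aᵀ)`. -/
def wedgeEnd {n : ℕ} (A B : Matrix (Fin n) (Fin n) ℝ) : Module.End ℝ (so n) where
  toFun M := ⟨(1 / 2 : ℝ) • (A * M.1 * Bᵀ + B * M.1 * Aᵀ), by
    rw [mem_so, Matrix.transpose_smul, wedgeEnd_key, smul_neg]⟩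
  map_add' M N := by
    apply Subtype.ext
    simp [Matrix.mul_add, Matrix.add_mul, smul_add]
    abel
  map_smul' c M := by
    apply Subtype.ext
    simp [Matrix.mul_smul, Matrix.smul_mul, smul_smul, mul_comm]

/-- Inner product `⟨A, B⟩ = tr(A ∘ B)` on endomorphisms of `⋀²ℝⁿ` (the Frobenius inner
product for self-adjoint operators). -/
def endIP {n : ℕ} (A B : Module.End ℝ (so n)) : ℝ := LinearMap.trace ℝ ↥(so n) (A * B)

/-- Norm of an endomorphism of `⋀²ℝⁿ` induced by `endIP`. -/
def endNorm {n : ℕ} (A : Module.End ℝ (so n)) : ℝ := Real.sqrt (endIP A A)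

/-- Huisken's trilinear form `tri(A,B,C) = tr((AB + BA + 2 A#B) ∘ C) = 2⟨Q(A,B), C⟩`. -/
def tri {n : ℕ} (A B C : Module.End ℝ (so n)) : ℝ :=
  LinearMap.trace ℝ ↥(so n) ((A * B + B * A + (2 : ℝ) • sharp A B) * C)

/-- The identity component `R_I = (s(R)/(n(n-1))) id ∧ id` of a curvature operator. -/
def compI {n : ℕ} (R : Module.End ℝ (so n)) : Module.End ℝ (so n) :=
  (scal R / ((n : ℝ) * ((n : ℝ) - 1))) • 1

/-- The traceless-Ricci component `R_{Ric₀} = (2/(n-2)) Ric₀(R) ∧ id`. -/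
def compRic0 {n : ℕ} (R : Module.End ℝ (so n)) : Module.End ℝ (so n) :=
  (2 / ((n : ℝ) - 2)) • wedgeEnd (Ric0M R) 1

/-- The Weyl component `R_W = R - R_I - R_{Ric₀}`. -/
def compW {n : ℕ} (R : Module.End ℝ (so n)) : Module.End ℝ (so n) := R - compI R - compRic0 R

/-- The derivative `DQ̃(R)` of the normalized vector field
`Q̃(R) = Q(R) - ‖Ric R‖² R` at `R`, applied to `A`:
`DQ̃(R)(A) = 2Q(R,A) - ‖Ric R‖² A - 2 tr(Ric R · Ric A) R`. -/
def DQt {n : ℕ} (R A : Module.End ℝ (so n)) : Module.End ℝ (so n) :=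
  (2 : ℝ) • Qbil R A - ricNormSq R • A - (2 * (RicM R * RicM A).trace) • R


/-- The block coefficient: `x` on `⋀²ℝⁿ`, `y` on the mixed part, `z` on `⋀²ℝᵏ`. -/
def bcoef (n k : ℕ) (x y z : ℝ) (i j : Fin (n + k)) : ℝ :=
  if (i : ℕ) < n then (if (j : ℕ) < n then x else y)
  else (if (j : ℕ) < n then y else z)

/-- The curvature operator `R_{x,y,z}` of `Sⁿ × ℝᵏ`-type: diagonal in the basis
`{e_i ∧ e_j}` with `R(e_i ∧ e_j) = x e_i ∧ e_j` for `i < j ≤ n`, `y e_i ∧ e_j` for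
`i ≤ n < j`, and `z e_i ∧ e_j` for `n < i < j`. -/
def Rxyz (n k : ℕ) (x y z : ℝ) : Module.End ℝ (so (n + k)) where
  toFun M := ⟨Matrix.of fun i j => bcoef n k x y z i j * M.1 i j, by
    rw [mem_so]
    ext i j
    simp only [Matrix.transpose_apply, Matrix.of_apply, Matrix.neg_apply]
    have hsymm : bcoef n k x y z j i = bcoef n k x y z i j := by
      unfold bcoef; split_ifs <;> rfl
    rw [hsymm, so_skew' M, mul_neg]⟩
  map_add' M N := by
    apply Subtype.ext
    ext i j
    simp [mul_add]
  map_smul' c M := by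
    apply Subtype.ext
    ext i j
    simp
    ring

/-!
Operators diagonal in the basis `e_i ∧ e_j` act on skew-symmetric matrices by entrywise
multiplication with a symmetric matrix `c`. Self-adjointness and the Bianchi identity hold for
entrywise products term by term. For self-adjoint `B`, invariance of the inner product turns the
sharp product into `(A # B)(M) = (1/2) Σ_α [ω_α, B[M, A ω_α]]`. The bracket `[M, e_a ∧ e_m]` has
`(m, b)` entry `M_{ab}` if `m ≠ a, b` and `0` otherwise (for `a ≠ b`), so the sharp product of two
diagonal operators is again diagonal, and `Q` acts by
`c_{ab} ↦ c_{ab}² + Σ_{m ≠ a, b} c_{am} c_{mb}`.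
-/

section SkewMatrices

variable {N : ℕ}

lemma so_apply_self (X : so N) (i : Fin N) : X.1 i i = 0 := by
  linarith [so_skew' X i i]

lemma so_ext_of_ne {X Y : so N} (h : ∀ a b, a ≠ b → X.1 a b = Y.1 a b) : X = Y := by
  ext a b
  rcases eq_or_ne a b with rfl | hab
  · rw [so_apply_self, so_apply_self]
  · exact h a b hab

lemma ip_eq_sum (X Y : so N) : ip X Y = (1 / 2) * ∑ i, ∑ j, X.1 i j * Y.1 i j := by
  have hswap (i j : Fin N) : X.1 i j * Y.1 j i = -(X.1 i j * Y.1 i j) := by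
    rw [so_skew' Y i j, mul_neg]
  simp only [ip, Matrix.trace, Matrix.diag_apply, Matrix.mul_apply, hswap,
    Finset.sum_neg_distrib, neg_mul_neg]

/-- The bracket of `so N` as a bilinear map, giving access to the `map_*` lemmas. -/
def brktL (N : ℕ) : so N →ₗ[ℝ] so N →ₗ[ℝ] so N :=
  LinearMap.mk₂ ℝ brkt
    (fun X Y Z => Subtype.ext <| by
      simp only [brkt, Submodule.coe_add, Matrix.add_mul, Matrix.mul_add]; abel)
    (fun c X Y => Subtype.ext <| by
      simp only [brkt, Submodule.coe_smul, Matrix.smul_mul, Matrix.mul_smul, smul_sub])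
    (fun X Y Z => Subtype.ext <| by
      simp only [brkt, Submodule.coe_add, Matrix.add_mul, Matrix.mul_add]; abel)
    (fun c X Y => Subtype.ext <| by
      simp only [brkt, Submodule.coe_smul, Matrix.smul_mul, Matrix.mul_smul, smul_sub])

lemma brktL_apply (X Y : so N) : brktL N X Y = brkt X Y := rfl

lemma ip_brkt (X Y Z : so N) : ip (brkt X Y) Z = ip Y (brkt Z X) := by
  simp only [ip, brkt, Matrix.sub_mul, Matrix.mul_sub, Matrix.trace_sub]
  rw [Matrix.trace_mul_cycle X.1 Y.1 Z.1, Matrix.mul_assoc Y.1 X.1 Z.1,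
    Matrix.trace_mul_comm (Z.1 * X.1) Y.1]

end SkewMatrices

section StandardBasis

variable {N : ℕ}

lemma coe_omegaB (i j : Fin N) :
    (omegaB (i, j)).1 = Matrix.single i j 1 - Matrix.single j i 1 := by
  ext a b
  simp [omegaB, wedgeVec, stdVec, Matrix.single_apply, Pi.single_apply, ← ite_and, eq_comm,
    and_comm]

lemma omegaB_swap (i j : Fin N) : omegaB (j, i) = -omegaB (i, j) :=
  Subtype.ext (by simp only [coe_omegaB, Submodule.coe_neg, neg_sub])

lemma omegaB_self (i : Fin N) : omegaB (i, i) = 0 :=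
  Subtype.ext (by simp only [coe_omegaB, sub_self, Submodule.coe_zero])

lemma ip_omegaB (p : Fin N × Fin N) (Y : so N) : ip (omegaB p) Y = Y.1 p.1 p.2 := by
  obtain ⟨i, j⟩ := p
  rw [ip, coe_omegaB, Matrix.sub_mul, Matrix.trace_sub, Matrix.trace_single_mul,
    Matrix.trace_single_mul, so_skew' Y i j]
  ring

lemma brkt_omegaB_apply (Y : so N) (i j a b : Fin N) :
    (brkt Y (omegaB (i, j))).1 a b =
      (if b = j then Y.1 a i else 0) - (if b = i then Y.1 a j else 0)
        - (if a = i then Y.1 j b else 0) + (if a = j then Y.1 i b else 0) := by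
  simp only [brkt, coe_omegaB, mul_sub, sub_mul, Matrix.sub_apply, Matrix.mul_apply,
    Matrix.single_apply, ite_and, mul_ite, mul_one, mul_zero, ite_mul, one_mul, zero_mul,
    Finset.sum_ite_eq, Finset.mem_univ, if_true, Finset.sum_ite_irrel, Finset.sum_const_zero,
    eq_comm]
  ring

lemma omegaB_brkt_apply (Y : so N) (i j a b : Fin N) :
    (brkt (omegaB (i, j)) Y).1 a b =
      (if a = i then Y.1 j b else 0) - (if a = j then Y.1 i b else 0)
        - (if b = j then Y.1 a i else 0) + (if b = i then Y.1 a j else 0) := by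
  have hskew : brkt (omegaB (i, j)) Y = -brkt Y (omegaB (i, j)) :=
    Subtype.ext (neg_sub _ _).symm
  rw [hskew, Submodule.coe_neg, Matrix.neg_apply, brkt_omegaB_apply]
  ring

lemma sum_sum_eq_two_nsmul_sum_pairs {E : Type*} [AddCommMonoid E] {f : Fin N → Fin N → E}
    (symm : ∀ i j, f j i = f i j) (diag : ∀ i, f i i = 0) :
    ∑ i, ∑ j, f i j = 2 • ∑ p ∈ pairs N, f p.1 p.2 := by
  have upper : ∑ p ∈ pairs N, f p.1 p.2 = ∑ i, ∑ j, if i < j then f i j else 0 := by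
    rw [pairs, Finset.sum_filter, Fintype.sum_prod_type]
  have lower : ∑ p ∈ pairs N, f p.1 p.2 = ∑ i, ∑ j, if j < i then f i j else 0 := by
    rw [upper, Finset.sum_comm]
    simp only [symm]
  have split (i j : Fin N) :
      f i j = (if i < j then f i j else 0) + if j < i then f i j else 0 := by
    rcases lt_trichotomy i j with h | rfl | h
    · simp [h, h.not_gt]
    · simp [diag]
    · simp [h, h.not_gt]
  calc ∑ i, ∑ j, f i j
      = (∑ i, ∑ j, if i < j then f i j else 0) + ∑ i, ∑ j, if j < i then f i j else 0 := by
        simp only [← Finset.sum_add_distrib, ← split]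
    _ = 2 • ∑ p ∈ pairs N, f p.1 p.2 := by rw [← upper, ← lower, two_nsmul]

lemma sum_pairs_ip_smul_omegaB (Y : so N) : ∑ p ∈ pairs N, ip (omegaB p) Y • omegaB p = Y := by
  have hdouble : ∑ i, ∑ j, Y.1 i j • omegaB (i, j) = (2 : ℕ) • Y := by
    apply Subtype.ext
    calc ((∑ i, ∑ j, Y.1 i j • omegaB (i, j) : so N)).1
        = (∑ i, ∑ j, Matrix.single i j (Y.1 i j)) - ∑ i, ∑ j, Matrix.single j i (Y.1 i j) := by
          simp [coe_omegaB, smul_sub, Matrix.smul_single]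
      _ = Y.1 - (Y.1)ᵀ := by
          rw [← Matrix.matrix_eq_sum_single, Finset.sum_comm]
          exact congrArg _ (Matrix.matrix_eq_sum_single (Y.1)ᵀ).symm
      _ = 2 • Y.1 := by rw [so_skew, sub_neg_eq_add, two_nsmul]
  rw [sum_sum_eq_two_nsmul_sum_pairs
    (fun i j => by rw [so_skew' Y i j, omegaB_swap, neg_smul_neg])
    (fun i => by rw [omegaB_self, smul_zero])] at hdouble
  simp only [two_nsmul, ← two_smul ℝ] at hdouble
  simp only [ip_omegaB]
  exact smul_right_injective (so N) (two_ne_zero (α := ℝ)) hdouble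

lemma sum_pairs_brkt_omegaB_apply {T : Fin N → Fin N → so N} (hT : ∀ i j, T j i = -T i j)
    (a b : Fin N) :
    (∑ p ∈ pairs N, brkt (omegaB p) (T p.1 p.2)).1 a b =
      ∑ m, ((T a m).1 m b - (T b m).1 m a) := by
  have hT_apply (i j r s : Fin N) : (T j i).1 r s = -(T i j).1 r s := by
    rw [hT, Submodule.coe_neg, Matrix.neg_apply]
  have hdouble : ∑ i, ∑ j, (brkt (omegaB (i, j)) (T i j)).1 a b =
      2 • ∑ p ∈ pairs N, (brkt (omegaB p) (T p.1 p.2)).1 a b := by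
    refine sum_sum_eq_two_nsmul_sum_pairs (fun i j => ?_) fun i => ?_
    · simp only [omegaB_swap i j, hT i j, ← brktL_apply, map_neg, LinearMap.neg_apply, neg_neg]
    · simp only [omegaB_self, ← brktL_apply, map_zero, LinearMap.zero_apply, Submodule.coe_zero,
        Matrix.zero_apply]
  have hentry : ∑ i, ∑ j, (brkt (omegaB (i, j)) (T i j)).1 a b =
      2 • ∑ m, ((T a m).1 m b - (T b m).1 m a) := by
    simp only [omegaB_brkt_apply, Finset.sum_add_distrib, Finset.sum_sub_distrib,
      Finset.sum_ite_irrel, Finset.sum_const_zero, Finset.sum_ite_eq, Finset.mem_univ, if_true,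
      hT_apply a, hT_apply b, fun m => so_skew' (T b m) m a, Finset.sum_neg_distrib, two_nsmul]
    ring
  rw [Submodule.coe_sum, Matrix.sum_apply]
  exact nsmul_right_injective two_ne_zero (hdouble.symm.trans hentry)

lemma sharp_apply {A B : Module.End ℝ (so N)} (hB : IsSelfAdjointCO B) (M : so N) :
    sharp A B M = (1 / 2 : ℝ) • ∑ p ∈ pairs N, brkt (omegaB p) (B (brkt M (A (omegaB p)))) := by
  have hip (p q : Fin N × Fin N) : ip (brkt (A (omegaB p)) (B (omegaB q))) M =
      ip (omegaB q) (B (brkt M (A (omegaB p)))) := by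
    rw [ip_brkt, hB]
  have hcontract (p : Fin N × Fin N) :
      ∑ q ∈ pairs N, ip (brkt (A (omegaB p)) (B (omegaB q))) M • brkt (omegaB p) (omegaB q) =
        brkt (omegaB p) (B (brkt M (A (omegaB p)))) := by
    simp only [hip, ← brktL_apply (omegaB p), ← map_smul, ← map_sum, sum_pairs_ip_smul_omegaB]
  simp only [sharp, LinearMap.smul_apply, LinearMap.sum_apply, LinearMap.smulRight_apply]
  exact congrArg _ (Finset.sum_congr rfl fun p _ => hcontract p)

lemma coe_sharp_apply {A B : Module.End ℝ (so N)} (hB : IsSelfAdjointCO B) (M : so N)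
    (a b : Fin N) :
    (sharp A B M).1 a b = (1 / 2) * ∑ m,
      ((B (brkt M (A (omegaB (a, m))))).1 m b - (B (brkt M (A (omegaB (b, m))))).1 m a) := by
  rw [sharp_apply hB, Submodule.coe_smul, Matrix.smul_apply, smul_eq_mul]
  congr 1
  refine sum_pairs_brkt_omegaB_apply (T := fun i j => B (brkt M (A (omegaB (i, j)))))
    (fun i j => ?_) a b
  simp only [omegaB_swap i j, ← brktL_apply, map_neg]

lemma brkt_omegaB_apply_of_ne (M : so N) {a b : Fin N} (hab : a ≠ b) (m : Fin N) :
    (brkt M (omegaB (a, m))).1 m b = if m ∈ ({a, b} : Finset (Fin N))ᶜ then M.1 a b else 0 := by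
  rw [brkt_omegaB_apply]
  by_cases hma : m = a
  · subst hma; simp [hab.symm]
  by_cases hmb : m = b
  · subst hmb; simp [hma, so_skew' M m a]
  · simp [hma, hmb, Ne.symm hmb, hab.symm]

end StandardBasis

section HadamardOperators

variable {N : ℕ} {c d : Matrix (Fin N) (Fin N) ℝ}

/-- The endomorphism `e_i ∧ e_j ↦ c_{ij} e_i ∧ e_j` of `⋀²ℝᴺ` for a symmetric matrix `c`, realised
on skew-symmetric matrices as the entrywise product with `c`. The diagonal of `c` is irrelevant. -/
def hadamardOp (c : Matrix (Fin N) (Fin N) ℝ) (hc : c.IsSymm) : Module.End ℝ (so N) where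
  toFun M := ⟨c ⊙ M.1, by
    rw [mem_so, Matrix.transpose_hadamard, hc.eq, so_skew, ← neg_one_smul ℝ,
      Matrix.hadamard_smul, neg_one_smul]⟩
  map_add' M M' := Subtype.ext (Matrix.hadamard_add _ _ _)
  map_smul' r M := Subtype.ext (Matrix.hadamard_smul _ _ r)

lemma hadamardOp_apply (hc : c.IsSymm) (M : so N) (a b : Fin N) :
    (hadamardOp c hc M).1 a b = c a b * M.1 a b := rfl

lemma hadamardOp_congr (hc : c.IsSymm) (hd : d.IsSymm) (h : ∀ a b, a ≠ b → c a b = d a b) :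
    hadamardOp c hc = hadamardOp d hd :=
  LinearMap.ext fun M => so_ext_of_ne fun a b hab => by
    rw [hadamardOp_apply, hadamardOp_apply, h a b hab]

lemma hadamardOp_omegaB (hc : c.IsSymm) (i j : Fin N) :
    hadamardOp c hc (omegaB (i, j)) = c i j • omegaB (i, j) := by
  ext a b
  simp only [hadamardOp_apply, Submodule.coe_smul, coe_omegaB, Matrix.smul_apply,
    Matrix.sub_apply, Matrix.single_apply, smul_eq_mul]
  by_cases h : i = a ∧ j = b
  · rw [h.1, h.2]
  by_cases h' : j = a ∧ i = b
  · rw [h'.1, h'.2, hc.apply]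
  · simp [h, h']

lemma isSelfAdjointCO_hadamardOp (hc : c.IsSymm) : IsSelfAdjointCO (hadamardOp c hc) := by
  intro X Y
  simp only [ip_eq_sum, hadamardOp_apply, mul_assoc, mul_left_comm]

lemma satBianchi_hadamardOp (hc : c.IsSymm) : SatBianchi (hadamardOp c hc) := by
  intro u v w t
  simp only [ip_eq_sum, ← mul_add, ← Finset.sum_add_distrib]
  refine mul_eq_zero_of_right _ (Finset.sum_eq_zero fun i _ => Finset.sum_eq_zero fun j _ => ?_)
  simp only [hadamardOp_apply, wedgeVec, Matrix.of_apply]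
  ring

lemma isACO_hadamardOp (hc : c.IsSymm) : IsACO (hadamardOp c hc) :=
  ⟨isSelfAdjointCO_hadamardOp hc, satBianchi_hadamardOp hc⟩

/-- The coefficients of the sharp product of the diagonal operators with coefficients `c` and `d`:
`(1/2) Σ_{m ≠ a, b} (c_{am} d_{mb} + d_{am} c_{mb})`. -/
def sharpCoeff (c d : Matrix (Fin N) (Fin N) ℝ) : Matrix (Fin N) (Fin N) ℝ :=
  Matrix.of fun a b => (1 / 2) * ∑ m ∈ {a, b}ᶜ, (c a m * d m b + d a m * c m b)

lemma isSymm_sharpCoeff (hc : c.IsSymm) (hd : d.IsSymm) : (sharpCoeff c d).IsSymm := by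
  refine Matrix.IsSymm.ext fun a b => ?_
  simp only [sharpCoeff, Matrix.of_apply, Finset.pair_comm b a]
  congr 1
  refine Finset.sum_congr rfl fun m _ => ?_
  rw [hc.apply m a, hc.apply b m, hd.apply m a, hd.apply b m]
  ring

lemma sharpCoeff_self (c : Matrix (Fin N) (Fin N) ℝ) (a b : Fin N) :
    sharpCoeff c c a b = ∑ m ∈ {a, b}ᶜ, c a m * c m b := by
  simp only [sharpCoeff, Matrix.of_apply, ← two_mul, ← Finset.mul_sum]
  ring

theorem sharp_hadamardOp (hc : c.IsSymm) (hd : d.IsSymm) :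
    sharp (hadamardOp c hc) (hadamardOp d hd) =
      hadamardOp (sharpCoeff c d) (isSymm_sharpCoeff hc hd) := by
  refine LinearMap.ext fun M => so_ext_of_ne fun a b hab => ?_
  have hterm {a b : Fin N} (hab : a ≠ b) (m : Fin N) :
      (hadamardOp d hd (brkt M (hadamardOp c hc (omegaB (a, m))))).1 m b =
        if m ∈ ({a, b} : Finset (Fin N))ᶜ then c a m * d m b * M.1 a b else 0 := by
    rw [hadamardOp_omegaB, ← brktL_apply, map_smul, brktL_apply, hadamardOp_apply,
      Submodule.coe_smul, Matrix.smul_apply, brkt_omegaB_apply_of_ne M hab, smul_eq_mul]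
    split_ifs <;> ring
  rw [coe_sharp_apply (isSelfAdjointCO_hadamardOp hd), hadamardOp_apply]
  simp only [hterm hab, hterm hab.symm, Finset.pair_comm b a, sharpCoeff, Matrix.of_apply,
    Finset.sum_sub_distrib, Finset.sum_ite_mem, Finset.univ_inter]
  rw [← Finset.sum_sub_distrib, mul_assoc, Finset.sum_mul]
  congr 1
  refine Finset.sum_congr rfl fun m _ => ?_
  rw [so_skew' M a b, hc.apply m b, hd.apply a m]
  ring

lemma isSymm_hadamard_self_add_sharpCoeff (hc : c.IsSymm) : (c ⊙ c + sharpCoeff c c).IsSymm :=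
  Matrix.IsSymm.add (by rw [Matrix.IsSymm, Matrix.transpose_hadamard, hc.eq])
    (isSymm_sharpCoeff hc hc)

theorem Qop_hadamardOp (hc : c.IsSymm) :
    Qop (hadamardOp c hc) =
      hadamardOp (c ⊙ c + sharpCoeff c c) (isSymm_hadamard_self_add_sharpCoeff hc) := by
  rw [Qop, sharp_hadamardOp]
  ext M a b
  change c a b * (c a b * M.1 a b) + sharpCoeff c c a b * M.1 a b =
    (c a b * c a b + sharpCoeff c c a b) * M.1 a b
  ring

end HadamardOperators

section BlockCoefficients

variable (n k : ℕ) (x y z : ℝ)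

lemma isSymm_bcoef : (Matrix.of (bcoef n k x y z)).IsSymm := by
  refine Matrix.IsSymm.ext fun i j => ?_
  simp only [Matrix.of_apply, bcoef]
  split_ifs <;> rfl

lemma Rxyz_eq_hadamardOp :
    Rxyz n k x y z = hadamardOp (Matrix.of (bcoef n k x y z)) (isSymm_bcoef n k x y z) := rfl

lemma sum_bcoef_mul_bcoef (a b : Fin (n + k)) :
    ∑ m, bcoef n k x y z a m * bcoef n k x y z m b =
      bcoef n k (n * x ^ 2 + k * y ^ 2) (y * (n * x + k * z)) (n * y ^ 2 + k * z ^ 2) a b := by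
  simp only [Fin.sum_univ_add, bcoef, Fin.val_castAdd, Fin.val_natAdd, Fin.is_lt, if_true,
    add_lt_iff_neg_left, not_lt_zero, if_false, Finset.sum_const, Finset.card_univ,
    Fintype.card_fin, nsmul_eq_mul]
  split_ifs <;> ring

lemma sharpCoeff_bcoef {a b : Fin (n + k)} (hab : a ≠ b) :
    sharpCoeff (Matrix.of (bcoef n k x y z)) (Matrix.of (bcoef n k x y z)) a b =
      bcoef n k ((n - 2) * x ^ 2 + k * y ^ 2) (y * ((n - 1) * x + (k - 1) * z))
        (n * y ^ 2 + (k - 2) * z ^ 2) a b := by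
  have htotal := Finset.sum_add_sum_compl {a, b}
    fun m => bcoef n k x y z a m * bcoef n k x y z m b
  rw [Finset.sum_pair hab, sum_bcoef_mul_bcoef] at htotal
  refine (sharpCoeff_self _ a b).trans ((eq_sub_of_add_eq' htotal).trans ?_)
  simp only [bcoef]
  split_ifs <;> ring

end BlockCoefficients

/-- For `n ≥ 2`, `k ≥ 1`, the operator `R_{x,y,z}` is an algebraic
curvature operator, and `Q(R_{x,y,z}) = R_{x',y',z'}` with
`x' = (n-1)x² + ky²`, `y' = y(y + (n-1)x + (k-1)z)`, `z' = (k-1)z² + ny²`;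
so the curvature ODE `dR/dt = Q(R)` restricted to this family is the system
`dx/dt = (n-1)x² + ky²`, `dy/dt = y(y + (n-1)x + (k-1)z)`, `dz/dt = (k-1)z² + ny²`. -/
theorem stmt7 (n k : ℕ) (hn : 2 ≤ n) (hk : 1 ≤ k) (x y z : ℝ) :
    IsACO (Rxyz n k x y z) ∧
    Qop (Rxyz n k x y z) =
      Rxyz n k (((n : ℝ) - 1) * x ^ 2 + (k : ℝ) * y ^ 2)
        (y * (y + ((n : ℝ) - 1) * x + ((k : ℝ) - 1) * z))
        (((k : ℝ) - 1) * z ^ 2 + (n : ℝ) * y ^ 2) := by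
  rw [Rxyz_eq_hadamardOp n k x y z]
  refine ⟨isACO_hadamardOp _, ?_⟩
  rw [Qop_hadamardOp, Rxyz_eq_hadamardOp]
  refine hadamardOp_congr _ _ fun a b hab => ?_
  rw [Matrix.add_apply, Matrix.hadamard_apply, sharpCoeff_bcoef n k x y z hab]
  simp only [Matrix.of_apply, bcoef]
  split_ifs <;> ring
end
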